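/- Let 2 < r̄ < ∞, q > N r̄/(r̄ - 2), T ∈ (0,∞], and set σ = (1/2)(1 - N/q) - 1/r̄. Suppose t^σ f(t) ∈ L^{r̄}(0,T; L^q(ℝ^N)). Then the function (Bf)(t) = ∫₀ᵗ ∇e^{(t-s)Δ} f(s) ds belongs to L^∞(0,T; L^∞(ℝ^N)) and for every t ∈ (0,T), ‖Bf(t)‖_{L^∞} ≤ C ‖s^σ f(s)‖_{L^{r̄}(0,t; L^q)}, with C depending only on N, q, r̄. -/

import Mathlib

open MeasureTheory Real
open scoped ENNReal

noncomputable section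

/-- The heat kernel on `ℝ^N`. -/
def heatKernel (N : ℕ) (t : ℝ) (x : EuclideanSpace ℝ (Fin N)) : ℝ :=
  (4 * π * t) ^ (-(N : ℝ) / 2) * Real.exp (-‖x‖ ^ 2 / (4 * t))

/-- Mixed space-time norm `‖f‖_{L^r(0,T;L^q)}` (with `T ∈ (0,∞]`, time exponent `r` finite). -/
def mixedNorm {N : ℕ} {F : Type*} [NormedAddCommGroup F] (r : ℝ) (q : ℝ≥0∞) (T : ℝ≥0∞)
    (f : ℝ → EuclideanSpace ℝ (Fin N) → F) : ℝ≥0∞ :=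
  (∫⁻ t in {t : ℝ | 0 < t ∧ ENNReal.ofReal t < T}, (eLpNorm (f t) q volume) ^ r) ^ (1 / r)

/-- The operator `B f (t) = ∫₀ᵗ ∇e^{(t-s)Δ} f(s) ds`, convolution with the gradient of
the heat kernel. -/
def heatOpB {N : ℕ} (f : ℝ → EuclideanSpace ℝ (Fin N) → ℝ) (t : ℝ)
    (x : EuclideanSpace ℝ (Fin N)) : EuclideanSpace ℝ (Fin N) :=
  ∫ s in Set.Ioo 0 t, ∫ y, f s y • gradient (heatKernel N (t - s)) (x - y)

/-! The gradient of the heat kernel is dominated by a heat kernel at the doubled time,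
`|∇G_t| ≤ 2^(N/2) t^(-1/2) G_{2t}`, so Hölder's inequality in space gives
`|∇e^{tΔ} f| ≤ c t^(-β) ‖f‖_q` with `β = (1 + N/q)/2`. For `B` this leaves the scalar integral
`∫₀ᵗ (t-s)^(-β) s^(-σ) ‖s^σ f(s)‖_q ds`, and Hölder's inequality in time bounds it by the norm of
`s^σ f` times the `1/r'`-th power of the beta integral `∫₀ᵗ s^(-σr') (t-s)^(-βr') ds`, where
`r' = r/(r-1)`. The condition `q > Nr/(r-2)` says exactly that `βr' < 1`, and for
`σ = (1 - N/q)/2 - 1/r` the exponents `σr'` and `βr'` add up to `1`, so that no power of `t`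
survives. -/

section Hoelder

variable {α : Type*} [MeasurableSpace α] {μ : Measure α} {p q : ℝ}

theorem lintegral_mul_le_Lp_mul_Lq_of_aemeasurable_left (hpq : p.HolderConjugate q)
    {k : α → ℝ≥0∞} (hk : AEMeasurable k μ) (hk_top : ∀ᵐ x ∂μ, k x ≠ ∞) (φ : α → ℝ≥0∞) :
    ∫⁻ x, k x * φ x ∂μ ≤ (∫⁻ x, k x ^ p ∂μ) ^ (1 / p) * (∫⁻ x, φ x ^ q ∂μ) ^ (1 / q) := by
  -- The lower integral only sees the measurable functions `g ≤ k * φ`,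
  -- and these factor as `k * (g / k)` with `g / k ≤ φ`.
  obtain ⟨g, hg, hgle, hgint⟩ := exists_measurable_le_lintegral_eq μ fun x => k x * φ x
  have hfactor : ∀ᵐ x ∂μ, g x = k x * (g x / k x) := by
    filter_upwards [hk_top] with x hx
    rcases eq_or_ne (k x) 0 with h0 | h0
    · have : g x = 0 := by simpa [h0] using hgle x
      simp [this]
    · exact (ENNReal.mul_div_cancel h0 hx).symm
  have hdiv : ∀ x, g x / k x ≤ φ x := fun x => ENNReal.div_le_of_le_mul' (hgle x)
  have := hpq.symm.nonneg
  have := hpq.symm.one_div_nonneg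
  calc ∫⁻ x, k x * φ x ∂μ = ∫⁻ x, k x * (g x / k x) ∂μ :=
        hgint.trans (lintegral_congr_ae hfactor)
    _ ≤ (∫⁻ x, k x ^ p ∂μ) ^ (1 / p) * (∫⁻ x, (g x / k x) ^ q ∂μ) ^ (1 / q) :=
        ENNReal.lintegral_mul_le_Lp_mul_Lq μ hpq hk (hg.aemeasurable.div hk)
    _ ≤ (∫⁻ x, k x ^ p ∂μ) ^ (1 / p) * (∫⁻ x, φ x ^ q ∂μ) ^ (1 / q) := by
        gcongr with x
        exact hdiv x

theorem eLpNorm_ofReal_eq_lintegral_rpow_enorm {E : Type*} [NormedAddCommGroup E] (hp : 0 < p)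
    (f : α → E) :
    eLpNorm f (ENNReal.ofReal p) μ = (∫⁻ x, ‖f x‖ₑ ^ p ∂μ) ^ (1 / p) := by
  rw [eLpNorm_eq_lintegral_rpow_enorm_toReal (by simpa using hp) (by simp),
    ENNReal.toReal_ofReal hp.le]

theorem enorm_integral_smul_le_eLpNorm_mul_eLpNorm {𝕜 E : Type*} [NormedField 𝕜]
    [NormedAddCommGroup E] [NormedSpace 𝕜 E] [NormedSpace ℝ E] (hpq : p.HolderConjugate q)
    (f : α → 𝕜) {g : α → E} (hg : AEStronglyMeasurable g μ) :
    ‖∫ x, f x • g x ∂μ‖ₑ ≤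
      eLpNorm g (ENNReal.ofReal p) μ * eLpNorm f (ENNReal.ofReal q) μ := by
  rw [eLpNorm_ofReal_eq_lintegral_rpow_enorm hpq.pos,
    eLpNorm_ofReal_eq_lintegral_rpow_enorm hpq.symm.pos]
  calc ‖∫ x, f x • g x ∂μ‖ₑ ≤ ∫⁻ x, ‖f x • g x‖ₑ ∂μ := enorm_integral_le_lintegral_enorm _
    _ = ∫⁻ x, ‖g x‖ₑ * ‖f x‖ₑ ∂μ := by simp_rw [enorm_smul, mul_comm]
    _ ≤ _ := lintegral_mul_le_Lp_mul_Lq_of_aemeasurable_left hpq hg.enorm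
        (.of_forall fun _ => enorm_ne_top) _

end Hoelder

section HeatKernel

variable {N : ℕ} {p q t : ℝ}

theorem heatKernel_pos (ht : 0 < t) (x : EuclideanSpace ℝ (Fin N)) : 0 < heatKernel N t x := by
  unfold heatKernel
  positivity

theorem continuous_heatKernel : Continuous (heatKernel N t) := by
  unfold heatKernel
  fun_prop

theorem hasGradientAt_heatKernel (x : EuclideanSpace ℝ (Fin N)) :
    HasGradientAt (heatKernel N t) (-(heatKernel N t x / (2 * t)) • x) x := by
  have h := (((hasStrictFDerivAt_norm_sq x).hasFDerivAt.neg.mul_const (4 * t)⁻¹).exp).const_mul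
    ((4 * π * t) ^ (-(N : ℝ) / 2))
  rw [hasGradientAt_iff_hasFDerivAt]
  convert! h using 1
  ext y
  simp only [heatKernel, div_eq_mul_inv, map_smul, smul_apply, Pi.neg_apply, smul_eq_mul,
    InnerProductSpace.toDual_apply_apply, coe_innerSL_apply, nsmul_eq_mul, Nat.cast_ofNat,
    neg_apply]
  ring

theorem gradient_heatKernel :
    gradient (heatKernel N t) = fun x => -(heatKernel N t x / (2 * t)) • x :=
  gradient_eq hasGradientAt_heatKernel

theorem continuous_gradient_heatKernel : Continuous (gradient (heatKernel N t)) := by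
  rw [gradient_heatKernel]
  have := continuous_heatKernel (N := N) (t := t)
  fun_prop

theorem heatKernel_mul_exp_eq (ht : 0 < t) (x : EuclideanSpace ℝ (Fin N)) :
    heatKernel N t x * exp (‖x‖ ^ 2 / (8 * t)) = 2 ^ ((N : ℝ) / 2) * heatKernel N (2 * t) x := by
  have hexp : exp (-‖x‖ ^ 2 / (4 * t)) * exp (‖x‖ ^ 2 / (8 * t)) =
      exp (-‖x‖ ^ 2 / (4 * (2 * t))) := by
    rw [← exp_add]
    congr 1
    field_simp
    ring
  have hpow : (2 : ℝ) ^ ((N : ℝ) / 2) * (4 * π * (2 * t)) ^ (-(N : ℝ) / 2) =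
      (4 * π * t) ^ (-(N : ℝ) / 2) := by
    rw [mul_left_comm, mul_rpow two_pos.le (by positivity), ← mul_assoc, ← rpow_add two_pos,
      neg_div, add_neg_cancel, rpow_zero, one_mul]
  rw [heatKernel, heatKernel, mul_assoc, hexp, ← hpow, mul_assoc]

theorem div_two_mul_le_rpow_mul_exp (ht : 0 < t) (a : ℝ) :
    a / (2 * t) ≤ t ^ (-(1 / 2) : ℝ) * exp (a ^ 2 / (8 * t)) := by
  obtain ⟨u, hu, rfl⟩ : ∃ u > 0, t = u ^ 2 := ⟨√t, sqrt_pos.2 ht, (sq_sqrt ht.le).symm⟩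
  have hu_inv : (u ^ 2) ^ (-(1 / 2) : ℝ) = u⁻¹ := by
    rw [rpow_neg (sq_nonneg u), ← sqrt_eq_rpow, sqrt_sq hu.le]
  calc a / (2 * u ^ 2) = u⁻¹ * (a / u / 2) := by field_simp
    _ ≤ u⁻¹ * ((a / u) ^ 2 / 8 + 1) := by
        gcongr
        linarith [sq_nonneg (a / u - 2)]
    _ ≤ u⁻¹ * exp ((a / u) ^ 2 / 8) := by
        gcongr
        exact add_one_le_exp _
    _ = (u ^ 2) ^ (-(1 / 2) : ℝ) * exp (a ^ 2 / (8 * u ^ 2)) := by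
        rw [hu_inv, div_pow, div_div, mul_comm (u ^ 2)]

theorem norm_gradient_heatKernel_le (ht : 0 < t) (x : EuclideanSpace ℝ (Fin N)) :
    ‖gradient (heatKernel N t) x‖ ≤
      2 ^ ((N : ℝ) / 2) * t ^ (-(1 / 2) : ℝ) * heatKernel N (2 * t) x := by
  have hG := (heatKernel_pos ht x).le
  calc ‖gradient (heatKernel N t) x‖ = heatKernel N t x * (‖x‖ / (2 * t)) := by
        rw [gradient_heatKernel, norm_smul, norm_neg, norm_of_nonneg (by positivity),
          div_mul_eq_mul_div, mul_div_assoc]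
    _ ≤ heatKernel N t x * (t ^ (-(1 / 2) : ℝ) * exp (‖x‖ ^ 2 / (8 * t))) := by
        gcongr
        exact div_two_mul_le_rpow_mul_exp ht ‖x‖
    _ = t ^ (-(1 / 2) : ℝ) * (heatKernel N t x * exp (‖x‖ ^ 2 / (8 * t))) := by ring
    _ = 2 ^ ((N : ℝ) / 2) * t ^ (-(1 / 2) : ℝ) * heatKernel N (2 * t) x := by
        rw [heatKernel_mul_exp_eq ht]
        ring

theorem lintegral_exp_neg_mul_sq_norm {V : Type*} [NormedAddCommGroup V] [InnerProductSpace ℝ V]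
    [FiniteDimensional ℝ V] [MeasurableSpace V] [BorelSpace V] {b : ℝ} (hb : 0 < b) :
    ∫⁻ v : V, ENNReal.ofReal (exp (-b * ‖v‖ ^ 2)) =
      ENNReal.ofReal ((π / b) ^ (Module.finrank ℝ V / 2 : ℝ)) := by
  have h := GaussianFourier.integral_rexp_neg_mul_sq_norm (V := V) hb
  rw [← h, ofReal_integral_eq_lintegral_ofReal (.of_integral_ne_zero (h ▸ by positivity))
    (.of_forall fun _ => (exp_pos _).le)]

theorem lintegral_enorm_heatKernel_rpow (hp : 0 < p) (ht : 0 < t) :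
    ∫⁻ x, ‖heatKernel N t x‖ₑ ^ p =
      ENNReal.ofReal ((4 * π * t) ^ (-((N : ℝ) / 2) * (p - 1)) * p ^ (-((N : ℝ) / 2))) := by
  have hpt : 0 < 4 * π * t := by positivity
  have hpow (x : EuclideanSpace ℝ (Fin N)) : ‖heatKernel N t x‖ₑ ^ p =
      ENNReal.ofReal ((4 * π * t) ^ (-(N : ℝ) / 2 * p)) *
        ENNReal.ofReal (exp (-(p / (4 * t)) * ‖x‖ ^ 2)) := by
    rw [enorm_of_nonneg (heatKernel_pos ht x).le, ENNReal.ofReal_rpow_of_pos (heatKernel_pos ht x),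
      heatKernel, mul_rpow (by positivity) (exp_pos _).le, ← rpow_mul hpt.le, ← exp_mul,
      ENNReal.ofReal_mul (by positivity)]
    congr 3
    ring
  simp_rw [hpow]
  rw [lintegral_const_mul' _ _ ENNReal.ofReal_ne_top, lintegral_exp_neg_mul_sq_norm (by positivity),
    finrank_euclideanSpace_fin, ← ENNReal.ofReal_mul (by positivity)]
  congr 1
  calc (4 * π * t) ^ (-(N : ℝ) / 2 * p) * (π / (p / (4 * t))) ^ ((N : ℝ) / 2)
      = (4 * π * t) ^ (-(N : ℝ) / 2 * p) * (4 * π * t * p⁻¹) ^ ((N : ℝ) / 2) := by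
        congr 2
        field_simp
    _ = (4 * π * t) ^ (-((N : ℝ) / 2) * (p - 1)) * p ^ (-((N : ℝ) / 2)) := by
        rw [mul_rpow hpt.le (by positivity), ← mul_assoc, ← rpow_add hpt, inv_rpow hp.le,
          rpow_neg hp.le]
        congr 2
        ring

theorem eLpNorm_heatKernel (hp : 0 < p) (ht : 0 < t) :
    eLpNorm (heatKernel N t) (ENNReal.ofReal p) volume =
      ENNReal.ofReal ((4 * π * t) ^ (-((N : ℝ) / 2) * (1 - p⁻¹)) * p ^ (-((N : ℝ) / 2) * p⁻¹)) := by
  rw [eLpNorm_ofReal_eq_lintegral_rpow_enorm hp, lintegral_enorm_heatKernel_rpow hp ht,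
    ENNReal.ofReal_rpow_of_pos (by positivity), mul_rpow (by positivity) (by positivity),
    ← rpow_mul (by positivity), ← rpow_mul hp.le, one_div]
  congr 3
  field_simp

/-- The constant in the smoothing estimate `‖∇e^{tΔ} f‖_∞ ≤ c t^(-(1 + N/q)/2) ‖f‖_q`, where `p` is
the conjugate exponent of `q`. -/
def heatGradConst (N : ℕ) (p : ℝ) : ℝ :=
  2 ^ ((N : ℝ) / 2) * ((8 * π) ^ (-((N : ℝ) / 2) * (1 - p⁻¹)) * p ^ (-((N : ℝ) / 2) * p⁻¹))

theorem heatGradConst_pos (hp : 0 < p) : 0 < heatGradConst N p := by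
  unfold heatGradConst
  positivity

theorem eLpNorm_gradient_heatKernel_le (hp : 0 < p) (ht : 0 < t) :
    eLpNorm (gradient (heatKernel N t)) (ENNReal.ofReal p) volume ≤
      ENNReal.ofReal (heatGradConst N p * t ^ (-((1 + N * (1 - p⁻¹)) / 2))) := by
  set a : ℝ := 2 ^ ((N : ℝ) / 2) * t ^ (-(1 / 2) : ℝ)
  have ha : 0 ≤ a := by positivity
  have htime : t ^ (-((1 + N * (1 - p⁻¹)) / 2)) =
      t ^ (-(1 / 2) : ℝ) * t ^ (-((N : ℝ) / 2) * (1 - p⁻¹)) := by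
    rw [← rpow_add ht]
    ring_nf
  calc eLpNorm (gradient (heatKernel N t)) (ENNReal.ofReal p) volume
      ≤ eLpNorm (a • heatKernel N (2 * t)) (ENNReal.ofReal p) volume :=
        eLpNorm_mono_real fun x => norm_gradient_heatKernel_le ht x
    _ = ENNReal.ofReal (a * ((4 * π * (2 * t)) ^ (-((N : ℝ) / 2) * (1 - p⁻¹)) *
          p ^ (-((N : ℝ) / 2) * p⁻¹))) := by
        rw [eLpNorm_const_smul, eLpNorm_heatKernel hp (by positivity), enorm_of_nonneg ha,
          ENNReal.ofReal_mul ha]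
    _ = ENNReal.ofReal (heatGradConst N p * t ^ (-((1 + N * (1 - p⁻¹)) / 2))) := by
        rw [show 4 * π * (2 * t) = 8 * π * t by ring, mul_rpow (by positivity) ht.le, htime,
          heatGradConst]
        congr 1
        ring

theorem enorm_integral_smul_gradient_heatKernel_le (hpq : p.HolderConjugate q) (ht : 0 < t)
    (f : EuclideanSpace ℝ (Fin N) → ℝ) (x : EuclideanSpace ℝ (Fin N)) :
    ‖∫ y, f y • gradient (heatKernel N t) (x - y)‖ₑ ≤
      ENNReal.ofReal (heatGradConst N p * t ^ (-((1 + (N : ℝ) / q) / 2))) *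
        eLpNorm f (ENNReal.ofReal q) volume := by
  have hcont := continuous_gradient_heatKernel (N := N) (t := t)
  calc ‖∫ y, f y • gradient (heatKernel N t) (x - y)‖ₑ
      ≤ eLpNorm (gradient (heatKernel N t) ∘ (x - ·)) (ENNReal.ofReal p) volume *
          eLpNorm f (ENNReal.ofReal q) volume :=
        enorm_integral_smul_le_eLpNorm_mul_eLpNorm hpq f
          (hcont.comp (continuous_sub_left x)).aestronglyMeasurable
    _ = eLpNorm (gradient (heatKernel N t)) (ENNReal.ofReal p) volume *
          eLpNorm f (ENNReal.ofReal q) volume := by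
        rw [eLpNorm_comp_measurePreserving hcont.aestronglyMeasurable
          (Measure.measurePreserving_sub_left volume x)]
    _ ≤ _ := by
        grw [eLpNorm_gradient_heatKernel_le hpq.pos ht]
        rw [hpq.one_sub_inv, ← div_eq_mul_inv]

end HeatKernel

section BetaIntegral

open ProbabilityTheory

variable {a b σ β t : ℝ}

theorem lintegral_Ioo_rpow_mul_one_sub_rpow (ha : a < 1) (hb : b < 1) :
    ∫⁻ s in Set.Ioo 0 1, ENNReal.ofReal (s ^ (-a) * (1 - s) ^ (-b)) =
      ENNReal.ofReal (beta (1 - a) (1 - b)) := by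
  have hbeta : 0 < beta (1 - a) (1 - b) := beta_pos (by linarith) (by linarith)
  have hone := lintegral_betaPDF_eq_one (sub_pos.2 ha) (sub_pos.2 hb)
  rw [lintegral_betaPDF] at hone
  simp_rw [sub_sub_cancel_left, mul_assoc, ENNReal.ofReal_mul (one_div_pos.2 hbeta).le] at hone
  rw [lintegral_const_mul' _ _ ENNReal.ofReal_ne_top, one_div, ENNReal.ofReal_inv_of_pos hbeta,
    mul_comm, ← div_eq_mul_inv] at hone
  exact (ENNReal.div_eq_one_iff (by simpa using hbeta) ENNReal.ofReal_ne_top).1 hone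

theorem lintegral_Ioo_rpow_mul_sub_rpow (ha : a < 1) (hb : b < 1) (ht : 0 < t) :
    ∫⁻ s in Set.Ioo 0 t, ENNReal.ofReal (s ^ (-a) * (t - s) ^ (-b)) =
      ENNReal.ofReal (t ^ (1 - a - b) * beta (1 - a) (1 - b)) := by
  have himage : (t * ·) '' Set.Ioo 0 1 = Set.Ioo 0 t := by simp [Set.image_mul_left_Ioo ht]
  have hderiv : ∀ s ∈ Set.Ioo (0 : ℝ) 1, HasDerivWithinAt (t * ·) t (Set.Ioo 0 1) s :=
    fun s _ => (hasDerivAt_const_mul t).hasDerivWithinAt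
  have hscale : ∀ s ∈ Set.Ioo (0 : ℝ) 1,
      ENNReal.ofReal |t| * ENNReal.ofReal ((t * s) ^ (-a) * (t - t * s) ^ (-b)) =
        ENNReal.ofReal (t ^ (1 - a - b)) * ENNReal.ofReal (s ^ (-a) * (1 - s) ^ (-b)) := by
    rintro s ⟨hs0, hs1⟩
    have hs : 0 ≤ 1 - s := by linarith
    have htpow : t ^ (1 - a - b) = t * t ^ (-a) * t ^ (-b) := by
      rw [sub_eq_add_neg, sub_eq_add_neg, rpow_add ht, rpow_add ht, rpow_one]
    rw [abs_of_pos ht, ← ENNReal.ofReal_mul ht.le, ← ENNReal.ofReal_mul (by positivity), htpow,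
      ← mul_one_sub, mul_rpow ht.le hs0.le, mul_rpow ht.le hs]
    congr 1
    ring
  rw [← himage, lintegral_image_eq_lintegral_abs_deriv_mul measurableSet_Ioo hderiv
      (mul_right_injective₀ ht.ne').injOn, setLIntegral_congr_fun measurableSet_Ioo hscale,
    lintegral_const_mul' _ _ ENNReal.ofReal_ne_top, lintegral_Ioo_rpow_mul_one_sub_rpow ha hb,
    ← ENNReal.ofReal_mul (by positivity)]

theorem lintegral_Ioo_sub_rpow_mul_le {r r' : ℝ} (hr : r'.HolderConjugate r) (hσ : σ * r' < 1)
    (hβ : β * r' < 1) (ht : 0 < t) (φ : ℝ → ℝ≥0∞) :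
    ∫⁻ s in Set.Ioo 0 t, ENNReal.ofReal ((t - s) ^ (-β)) * φ s ≤
      ENNReal.ofReal (t ^ (r'⁻¹ - σ - β) * beta (1 - σ * r') (1 - β * r') ^ r'⁻¹) *
        (∫⁻ s in Set.Ioo 0 t, (ENNReal.ofReal (s ^ σ) * φ s) ^ r) ^ (1 / r) := by
  have hr' := hr.pos
  have hbeta : 0 < beta (1 - σ * r') (1 - β * r') := beta_pos (by linarith) (by linarith)
  set k : ℝ → ℝ≥0∞ := fun s => ENNReal.ofReal (s ^ (-σ) * (t - s) ^ (-β)) with hk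
  have hsplit : ∀ s ∈ Set.Ioo 0 t,
      ENNReal.ofReal ((t - s) ^ (-β)) * φ s = k s * (ENNReal.ofReal (s ^ σ) * φ s) := by
    rintro s ⟨hs0, hst⟩
    have : 0 ≤ t - s := by linarith
    rw [hk, ← mul_assoc, ← ENNReal.ofReal_mul (by positivity), mul_right_comm, ← rpow_add hs0,
      neg_add_cancel, rpow_zero, one_mul]
  have hkpow : ∀ s ∈ Set.Ioo 0 t,
      k s ^ r' = ENNReal.ofReal (s ^ (-(σ * r')) * (t - s) ^ (-(β * r'))) := by
    rintro s ⟨hs0, hst⟩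
    have hts : 0 ≤ t - s := by linarith
    rw [hk, ENNReal.ofReal_rpow_of_nonneg (by positivity) hr'.le,
      mul_rpow (by positivity) (by positivity), ← rpow_mul hs0.le, ← rpow_mul hts, neg_mul,
      neg_mul]
  have hknorm : (∫⁻ s in Set.Ioo 0 t, k s ^ r') ^ (1 / r') =
      ENNReal.ofReal (t ^ (r'⁻¹ - σ - β) * beta (1 - σ * r') (1 - β * r') ^ r'⁻¹) := by
    rw [setLIntegral_congr_fun measurableSet_Ioo hkpow,
      lintegral_Ioo_rpow_mul_sub_rpow hσ hβ ht, ENNReal.ofReal_rpow_of_pos (by positivity),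
      mul_rpow (by positivity) hbeta.le, ← rpow_mul ht.le, one_div]
    congr 3
    field_simp
  rw [setLIntegral_congr_fun measurableSet_Ioo hsplit, ← hknorm]
  exact lintegral_mul_le_Lp_mul_Lq_of_aemeasurable_left hr (by fun_prop)
    (.of_forall fun _ => ENNReal.ofReal_ne_top) _

end BetaIntegral

section HeatOperator

open ProbabilityTheory

theorem mixedNorm_ofReal_rpow_mul {N : ℕ} (r σ t : ℝ) (q : ℝ≥0∞)
    (f : ℝ → EuclideanSpace ℝ (Fin N) → ℝ) :
    mixedNorm r q (ENNReal.ofReal t) (fun s x => s ^ σ * f s x) =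
      (∫⁻ s in Set.Ioo 0 t, (ENNReal.ofReal (s ^ σ) * eLpNorm (f s) q volume) ^ r) ^ (1 / r) := by
  have hset : {s : ℝ | 0 < s ∧ ENNReal.ofReal s < ENNReal.ofReal t} = Set.Ioo 0 t := by
    ext s
    simp only [Set.mem_ofPred_eq, Set.mem_Ioo, ENNReal.ofReal_lt_ofReal_iff']
    exact ⟨fun ⟨hs, hst, _⟩ => ⟨hs, hst⟩, fun ⟨hs, hst⟩ => ⟨hs, hst, hs.trans hst⟩⟩
  rw [mixedNorm, hset]
  congr 1
  refine setLIntegral_congr_fun measurableSet_Ioo fun s hs => ?_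
  have hs0 : 0 ≤ s ^ σ := rpow_nonneg hs.1.le σ
  rw [← enorm_of_nonneg hs0, ← eLpNorm_const_smul]
  rfl

variable {N : ℕ} {p q r r' σ t : ℝ}

theorem enorm_heatOpB_le (hpq : p.HolderConjugate q) (hr : r'.HolderConjugate r)
    (hσ : σ * r' < 1) (hq : (1 + (N : ℝ) / q) / 2 * r' < 1) (ht : 0 < t)
    (f : ℝ → EuclideanSpace ℝ (Fin N) → ℝ) (x : EuclideanSpace ℝ (Fin N)) :
    ‖heatOpB f t x‖ₑ ≤
      ENNReal.ofReal (heatGradConst N p * (t ^ (r'⁻¹ - σ - (1 + (N : ℝ) / q) / 2) *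
          beta (1 - σ * r') (1 - (1 + (N : ℝ) / q) / 2 * r') ^ r'⁻¹)) *
        mixedNorm r (ENNReal.ofReal q) (ENNReal.ofReal t) (fun s x => s ^ σ * f s x) := by
  set β := (1 + (N : ℝ) / q) / 2
  have hc : 0 ≤ heatGradConst N p := (heatGradConst_pos hpq.pos).le
  rw [mixedNorm_ofReal_rpow_mul, ENNReal.ofReal_mul hc, mul_assoc]
  calc ‖heatOpB f t x‖ₑ
      ≤ ∫⁻ s in Set.Ioo 0 t, ‖∫ y, f s y • gradient (heatKernel N (t - s)) (x - y)‖ₑ :=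
        enorm_integral_le_lintegral_enorm _
    _ ≤ ∫⁻ s in Set.Ioo 0 t, ENNReal.ofReal (heatGradConst N p) *
          (ENNReal.ofReal ((t - s) ^ (-β)) * eLpNorm (f s) (ENNReal.ofReal q) volume) := by
        refine setLIntegral_mono' measurableSet_Ioo fun s hs => ?_
        rw [← mul_assoc, ← ENNReal.ofReal_mul hc]
        exact enorm_integral_smul_gradient_heatKernel_le hpq (sub_pos.2 hs.2) (f s) x
    _ ≤ _ := by
        rw [lintegral_const_mul' _ _ ENNReal.ofReal_ne_top]
        gcongr
        exact lintegral_Ioo_sub_rpow_mul_le hr hσ hq ht _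

theorem one_lt_of_mul_div_sub_two_lt {n : ℝ} (hn : 1 ≤ n) (hr : 2 < r)
    (hq : n * r / (r - 2) < q) : 1 < q := by
  refine lt_trans ?_ hq
  rw [one_lt_div (by linarith)]
  nlinarith

theorem one_add_div_div_two_lt {n : ℝ} (hq₀ : 0 < q) (hr : 2 < r)
    (hq : n * r / (r - 2) < q) : (1 + n / q) / 2 < 1 - 1 / r := by
  rw [div_lt_iff₀ (by linarith)] at hq
  have hnq : n / q < 1 - 2 / r := by
    rw [div_lt_iff₀ hq₀, one_sub_div (by linarith), div_mul_eq_mul_div, lt_div_iff₀ (by linarith)]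
    linarith
  have : 2 / r = 2 * (1 / r) := by ring
  linarith

theorem heatOpB_Linfty_bound_general (N : ℕ) (hN : 0 < N) (r q σ : ℝ)
    (hr : 2 < r) (hq : (N : ℝ) * r / (r - 2) < q) (hσ : σ < 1 - 1 / r) :
    ∃ C > 0, ∀ (f : ℝ → EuclideanSpace ℝ (Fin N) → ℝ) (t : ℝ), 0 < t →
      eLpNorm (heatOpB f t) ∞ volume ≤
        ENNReal.ofReal (C * t ^ ((1 - (N : ℝ) / q) / 2 - 1 / r - σ)) *
          mixedNorm r (ENNReal.ofReal q) (ENNReal.ofReal t) (fun s x => s ^ σ * f s x) := by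
  have hq₁ : 1 < q := one_lt_of_mul_div_sub_two_lt (mod_cast hN) hr hq
  have hpq := (HolderConjugate.conjExponent hq₁).symm
  have hrr' := (HolderConjugate.conjExponent (one_lt_two.trans hr)).symm
  set r' := r.conjExponent
  set β := (1 + (N : ℝ) / q) / 2 with hβ_def
  have hinv : 1 - 1 / r = 1 / r' := by rw [one_div, one_div, hrr'.symm.one_sub_inv]
  have hσr' : σ * r' < 1 := (lt_div_iff₀ hrr'.pos).1 (hinv ▸ hσ)
  have hβr' : β * r' < 1 := (lt_div_iff₀ hrr'.pos).1
    (hinv ▸ one_add_div_div_two_lt (by linarith) hr hq)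
  have hbeta := beta_pos (sub_pos.2 hσr') (sub_pos.2 hβr')
  refine ⟨heatGradConst N q.conjExponent * beta (1 - σ * r') (1 - β * r') ^ r'⁻¹,
    mul_pos (heatGradConst_pos hpq.pos) (by positivity), fun f t ht => ?_⟩
  rw [eLpNorm_exponent_top]
  refine essSup_le_of_ae_le _ (.of_forall fun x => ?_)
  have hexp : (1 - (N : ℝ) / q) / 2 - 1 / r - σ = r'⁻¹ - σ - β := by
    rw [← one_div, ← hinv, hβ_def]
    ring
  rw [hexp, mul_assoc, mul_comm (_ ^ _)]
  exact enorm_heatOpB_le hpq hrr' hσr' hβr' ht f x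

end HeatOperator

/-- Lemma 7: for `2 < r̄ < ∞`, `q > Nr̄/(r̄-2)` and `σ = (1/2)(1 - N/q) - 1/r̄`, if
`t^σ f ∈ L^{r̄}(0,T;L^q)` then `Bf ∈ L^∞(0,T;L^∞)` with
`‖Bf(t)‖_{L^∞} ≤ C ‖s^σ f‖_{L^{r̄}(0,t;L^q)}` for every `t ∈ (0,T)`. -/
theorem heatOpB_Linfty_bound (N : ℕ) (hN : 0 < N) (r q : ℝ)
    (hr : 2 < r) (hq : (N : ℝ) * r / (r - 2) < q) :
    ∃ C > 0, ∀ (T : ℝ≥0∞), 0 < T → ∀ f : ℝ → EuclideanSpace ℝ (Fin N) → ℝ,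
      mixedNorm r (ENNReal.ofReal q) T
          (fun s x => s ^ ((1 - (N : ℝ) / q) / 2 - 1 / r) * f s x) < ∞ →
      ∀ t : ℝ, 0 < t → ENNReal.ofReal t < T →
        eLpNorm (heatOpB f t) ∞ volume ≤
          ENNReal.ofReal C * mixedNorm r (ENNReal.ofReal q) (ENNReal.ofReal t)
            (fun s x => s ^ ((1 - (N : ℝ) / q) / 2 - 1 / r) * f s x) := by
  have hq₀ : 0 < q := one_pos.trans (one_lt_of_mul_div_sub_two_lt (mod_cast hN) hr hq)
  have hσ : (1 - (N : ℝ) / q) / 2 - 1 / r < 1 - 1 / r := by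
    linarith [show 0 ≤ (N : ℝ) / q by positivity]
  obtain ⟨C, hC, hbound⟩ := heatOpB_Linfty_bound_general N hN r q _ hr hq hσ
  exact ⟨C, hC, fun T _ f _ t ht _ => by simpa using hbound f t ht⟩
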